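/- arXiv:2006.09398 — 2 statements merged into one kernel-verified Lean document; each statement's English description precedes it below -/
import Mathlib

section
/- Let A be an abelian category equipped with a model structure such that the trivial cofibrations are exactly the monomorphisms whose cokernel is acyclic. Let f : X → Y be an epimorphism in A and let F be the kernel of f. Then f is a fibration if and only if F is fibrant. -/
/-!
By the retract argument, fibrations are exactly the maps with the right lifting property against
trivial cofibrations (`ModelStructure.fib_of_lifting`). For `f` a fibration, the lifting property of
`kernel f ⟶ 0` follows by lifting against `f` over the zero map to `Y`.

Conversely let `F = kernel f` be fibrant, and consider a lifting problem `(u, v)` from a trivial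
cofibration `i : B ⟶ B'` to `f`. With `P = X ×_Y B'`, the square amounts to a map `s : B ⟶ P`
over `i`, and `0 ⟶ F ⟶ P ⟶ B' ⟶ 0` is exact. Dividing by the image of `B` gives an extension of
`cokernel i` by `F`, so `F ⟶ cokernel s` is a monomorphism with acyclic cokernel, hence a trivial
cofibration, and it splits since `F` is fibrant. The resulting retraction of `F ⟶ P` vanishes
on `s`, and the section of `P ⟶ B'` complementary to it extends `s`
(`PaperModel.hasLift_of_fibrant_kernel`).
-/

open CategoryTheory Limits ZeroObject

universe w v u

namespace PaperModel

variable {A : Type u} [Category.{v} A]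

/-- A class of morphisms `P` is closed under retracts if, whenever a morphism `f`
is a retract of a morphism `g` in the arrow category, `P g` implies `P f`. -/
def RetractClosed (P : MorphismProperty A) : Prop :=
  ∀ ⦃X Y X' Y' : A⦄ (f : X ⟶ Y) (g : X' ⟶ Y')
    (i : X ⟶ X') (r : X' ⟶ X) (j : Y ⟶ Y') (s : Y' ⟶ Y),
    i ≫ r = 𝟙 X → j ≫ s = 𝟙 Y → i ≫ g = f ≫ j → g ≫ s = r ≫ f →
    P g → P f

/-- A model structure on a category: three classes of morphisms (weak equivalences,
cofibrations, fibrations) satisfying Quillen's axioms (two-out-of-three for weak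
equivalences, closure of all three classes under retracts, lifting of (trivial)
cofibrations against (trivial) fibrations, and the two factorizations).
Bicompleteness is imposed separately via `HasLimits`/`HasColimits`. -/
structure ModelStructure (A : Type u) [Category.{v} A] where
  /-- weak equivalences -/
  W : MorphismProperty A
  /-- cofibrations -/
  Cof : MorphismProperty A
  /-- fibrations -/
  Fib : MorphismProperty A
  /-- two-out-of-three: composition -/
  W_comp : ∀ ⦃X Y Z : A⦄ (f : X ⟶ Y) (g : Y ⟶ Z), W f → W g → W (f ≫ g)
  /-- two-out-of-three: left cancellation -/
  W_of_comp_left : ∀ ⦃X Y Z : A⦄ (f : X ⟶ Y) (g : Y ⟶ Z), W f → W (f ≫ g) → W g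
  /-- two-out-of-three: right cancellation -/
  W_of_comp_right : ∀ ⦃X Y Z : A⦄ (f : X ⟶ Y) (g : Y ⟶ Z), W g → W (f ≫ g) → W f
  /-- identities are weak equivalences -/
  W_id : ∀ (X : A), W (𝟙 X)
  /-- weak equivalences are closed under retracts -/
  W_retract : RetractClosed W
  /-- cofibrations are closed under retracts -/
  Cof_retract : RetractClosed Cof
  /-- fibrations are closed under retracts -/
  Fib_retract : RetractClosed Fib
  /-- trivial cofibrations lift against fibrations -/
  lift_trivCof_fib : ∀ ⦃B B' X Y : A⦄ (i : B ⟶ B') (p : X ⟶ Y),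
    Cof i → W i → Fib p → HasLiftingProperty i p
  /-- cofibrations lift against trivial fibrations -/
  lift_cof_trivFib : ∀ ⦃B B' X Y : A⦄ (i : B ⟶ B') (p : X ⟶ Y),
    Cof i → Fib p → W p → HasLiftingProperty i p
  /-- factorization as a trivial cofibration followed by a fibration -/
  factor_trivCof_fib : ∀ ⦃X Y : A⦄ (f : X ⟶ Y),
    ∃ (Z : A) (g : X ⟶ Z) (h : Z ⟶ Y), Cof g ∧ W g ∧ Fib h ∧ g ≫ h = f
  /-- factorization as a cofibration followed by a trivial fibration -/
  factor_cof_trivFib : ∀ ⦃X Y : A⦄ (f : X ⟶ Y),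
    ∃ (Z : A) (g : X ⟶ Z) (h : Z ⟶ Y), Cof g ∧ Fib h ∧ W h ∧ g ≫ h = f

variable [Abelian A]

/-- An object is acyclic if the unique map to the zero object is a weak equivalence. -/
def ModelStructure.Acyclic (M : ModelStructure A) (X : A) : Prop :=
  M.W (0 : X ⟶ (0 : A))

/-- An object is fibrant if the unique map to the zero object is a fibration. -/
def ModelStructure.Fibrant (M : ModelStructure A) (X : A) : Prop :=
  M.Fib (0 : X ⟶ (0 : A))

end PaperModel

namespace PaperModel

variable {A : Type u} [Category.{v} A]

/-- The retract argument: factor `f` as a trivial cofibration followed by a fibration and lift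
the former against `f`. -/
lemma ModelStructure.fib_of_lifting (M : ModelStructure A) {X Y : A} (f : X ⟶ Y)
    (H : ∀ ⦃B B' : A⦄ (i : B ⟶ B') (u : B ⟶ X) (v : B' ⟶ Y), M.Cof i → M.W i →
      u ≫ f = i ≫ v → ∃ l : B' ⟶ X, i ≫ l = u ∧ l ≫ f = v) : M.Fib f := by
  obtain ⟨Z, g, h, hg, hg', hh, fac⟩ := M.factor_trivCof_fib f
  obtain ⟨l, hl, hl'⟩ := H g (𝟙 X) h hg hg' (by simp [fac])
  exact M.Fib_retract f h g l (𝟙 Y) (𝟙 Y) hl (by simp) (by simp [fac]) (by simp [hl']) hh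

variable [Abelian A]

lemma ModelStructure.acyclic_of_retract (M : ModelStructure A) {C D : A} (a : C ⟶ D) (b : D ⟶ C)
    (hab : a ≫ b = 𝟙 C) (hD : M.Acyclic D) : M.Acyclic C :=
  M.W_retract (0 : C ⟶ (0 : A)) (0 : D ⟶ (0 : A)) a b (𝟙 _) (𝟙 _) hab (by simp) (by simp)
    (by simp) hD

/-- Lifting of a monomorphism `i` with acyclic cokernel against an epimorphism with
fibrant kernel: the obstruction is an extension of `cokernel i` by `kernel f`, which splits. -/
lemma hasLift_of_fibrant_kernel (M : ModelStructure A)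
    (hTC : ∀ ⦃X Y : A⦄ (f : X ⟶ Y),
      (M.Cof f ∧ M.W f) ↔ (Mono f ∧ M.Acyclic (cokernel f)))
    {X Y : A} (f : X ⟶ Y) [Epi f] (hF : M.Fibrant (kernel f))
    {B B' : A} (i : B ⟶ B') (u : B ⟶ X) (v : B' ⟶ Y) [Mono i] (hi : M.Acyclic (cokernel i))
    (w : u ≫ f = i ≫ v) : ∃ l : B' ⟶ X, i ≫ l = u ∧ l ≫ f = v := by
  let p : pullback f v ⟶ B' := pullback.snd f v
  have : Epi p := inferInstanceAs (Epi (pullback.snd f v))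
  let s : B ⟶ pullback f v := pullback.lift u i w
  have hs : s ≫ p = i := pullback.lift_snd _ _ _
  have : Mono s := by
    have : Mono (s ≫ p) := by rw [hs]; infer_instance
    exact mono_of_mono s p
  let k : kernel f ⟶ pullback f v := pullback.lift (kernel.ι f) 0 (by simp)
  have hk1 : k ≫ pullback.fst f v = kernel.ι f := pullback.lift_fst _ _ _
  have hk2 : k ≫ p = 0 := pullback.lift_snd _ _ _
  have : Mono k := by
    have : Mono (k ≫ pullback.fst f v) := by rw [hk1]; infer_instance
    exact mono_of_mono k (pullback.fst f v)
  -- `p` is a cokernel of `k`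
  have desc : ∀ {T : A} (g : pullback f v ⟶ T), k ≫ g = 0 → ∃ h : B' ⟶ T, p ≫ h = g := by
    intro T g hg
    have e : kernel.ι p = kernel.lift f (kernel.ι p ≫ pullback.fst f v) (by
        rw [Category.assoc, pullback.condition, ← Category.assoc]
        change (kernel.ι p ≫ p) ≫ v = 0
        simp) ≫ k := by
      apply pullback.hom_ext
      · simp [hk1]
      · change kernel.ι p ≫ p = (_ ≫ k) ≫ p
        simp [hk2]
    have e' : kernel.ι p ≫ g = 0 := by rw [e, Category.assoc, hg, comp_zero]
    exact ⟨Abelian.epiDesc p g e', Abelian.comp_epiDesc p g e'⟩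
  let q : kernel f ⟶ cokernel s := k ≫ cokernel.π s
  have hq : Mono q := by
    refine Preadditive.mono_of_cancel_zero _ fun {T} x hx => ?_
    have hx' : (x ≫ k) ≫ cokernel.π s = 0 := by simpa [q] using hx
    have hb := Abelian.monoLift_comp s (x ≫ k) hx'
    have hb0 : Abelian.monoLift s (x ≫ k) hx' = 0 := by
      rw [← cancel_mono i, ← hs, ← Category.assoc, hb]
      simp [hk2]
    rw [← cancel_mono k, ← hb, hb0]
    simp
  have hqa : M.Acyclic (cokernel q) := by
    obtain ⟨h, hh⟩ := desc (cokernel.π s ≫ cokernel.π q)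
      (by rw [← Category.assoc]; exact cokernel.condition q)
    refine M.acyclic_of_retract
      (cokernel.desc q (cokernel.desc s (p ≫ cokernel.π i)
        (by rw [← Category.assoc, hs, cokernel.condition]))
        (by simp only [q, Category.assoc, cokernel.π_desc]
            rw [← Category.assoc, hk2, zero_comp]))
      (cokernel.desc i h
        (by rw [← hs, Category.assoc, hh, ← Category.assoc, cokernel.condition, zero_comp])) ?_ hi
    rw [← cancel_epi (cokernel.π q), ← cancel_epi (cokernel.π s)]
    simp [hh]
  obtain ⟨hq1, hq2⟩ := (hTC q).2 ⟨hq, hqa⟩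
  have := M.lift_trivCof_fib q (0 : kernel f ⟶ (0 : A)) hq1 hq2 hF
  have sq : CommSq (𝟙 (kernel f)) q (0 : kernel f ⟶ (0 : A)) 0 := ⟨by simp⟩
  let r : pullback f v ⟶ kernel f := cokernel.π s ≫ sq.lift
  have hkr : k ≫ r = 𝟙 _ := (Category.assoc _ _ _).symm.trans sq.fac_left
  have hsr : s ≫ r = 0 := by simp [r]
  -- `𝟙 - r ≫ k` is the idempotent complementary to the retraction `r`
  obtain ⟨t, ht⟩ := desc (𝟙 _ - r ≫ k) (by
    rw [Preadditive.comp_sub, ← Category.assoc, hkr]; simp)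
  have htp : t ≫ p = 𝟙 B' := by
    rw [← cancel_epi p, ← Category.assoc, ht, Preadditive.sub_comp, Category.assoc, hk2]
    simp
  have hit : i ≫ t = s := by
    rw [← hs, Category.assoc, ht, Preadditive.comp_sub, ← Category.assoc, hsr]
    simp
  refine ⟨t ≫ pullback.fst f v, ?_, ?_⟩
  · rw [← Category.assoc, hit]
    exact pullback.lift_fst _ _ _
  · rw [Category.assoc, pullback.condition, ← Category.assoc]
    change (t ≫ p) ≫ v = v
    rw [htp, Category.id_comp]

end PaperModel

open PaperModel

theorem bousfield_fibration_iff_fibrant_kernel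
    {A : Type u} [Category.{v} A] [Abelian A] [HasLimits A] [HasColimits A]
    (M : ModelStructure A)
    (hTC : ∀ ⦃X Y : A⦄ (f : X ⟶ Y),
      (M.Cof f ∧ M.W f) ↔ (Mono f ∧ M.Acyclic (cokernel f)))
    {X Y : A} (f : X ⟶ Y) (hf : Epi f) :
    M.Fib f ↔ M.Fibrant (kernel f) := by
  constructor
  · intro h
    refine M.fib_of_lifting _ fun B B' i u v hi hi' _ => ?_
    have := M.lift_trivCof_fib i f hi hi' h
    have sq : CommSq (u ≫ kernel.ι f) i f 0 := ⟨by simp⟩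
    refine ⟨kernel.lift f sq.lift sq.fac_right, ?_, (isZero_zero A).eq_of_tgt _ _⟩
    rw [← cancel_mono (kernel.ι f)]
    simp
  · intro hF
    refine M.fib_of_lifting _ fun B B' i u v hi hi' w => ?_
    obtain ⟨_, hc⟩ := (hTC i).1 ⟨hi, hi'⟩
    exact hasLift_of_fibrant_kernel M hTC f hF i u v hc w
end

section
/- Let A be an abelian category equipped with a model structure such that the trivial cofibrations are exactly the monomorphisms whose cokernel is acyclic. Then an object F of A is fibrant if and only if every short exact sequence 0 → F → E → X → 0 in A with X acyclic splits (equivalently, the monomorphism F → E admits a retraction). -/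
/-!
If `F` is fibrant and `0 → F → E → X → 0` is exact with `X` acyclic, then `F → E` is a trivial
cofibration, so `𝟙 F` extends along it by lifting against `F → 0`. Conversely, factor `F → 0` as a
trivial cofibration `F → Z` followed by a fibration `Z → 0`: the cokernel of `F → Z` is acyclic,
so `F → Z` splits, `F` is a retract of the fibrant object `Z`, and hence `F` is fibrant.
-/

open CategoryTheory Limits ZeroObject

universe w v u

open PaperModel
theorem fibrant_iff_ses_with_acyclic_cokernel_splits
    {A : Type u} [Category.{v} A] [Abelian A] [HasLimits A] [HasColimits A]
    (M : ModelStructure A)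
    (hTC : ∀ ⦃X Y : A⦄ (f : X ⟶ Y),
      (M.Cof f ∧ M.W f) ↔ (Mono f ∧ M.Acyclic (cokernel f)))
    (F : A) :
    M.Fibrant F ↔
      ∀ (E X : A) (i : F ⟶ E) (p : E ⟶ X) (w : i ≫ p = 0),
        (ShortComplex.mk i p w).ShortExact → M.Acyclic X →
          ∃ r : E ⟶ F, i ≫ r = 𝟙 F := by
  constructor
  · intro hF E X i p w hS hX
    have hi : Mono i := hS.mono_f
    let e : cokernel i ≅ X := (cokernelIsCokernel i).coconePointUniqueUpToIso hS.gIsCokernel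
    have hC : M.Acyclic (cokernel i) :=
      M.W_retract _ _ e.hom e.inv (𝟙 _) (𝟙 _) e.hom_inv_id (Category.id_comp _)
        (by simp) (by simp) hX
    obtain ⟨hcof, hW⟩ := (hTC i).2 ⟨hi, hC⟩
    have := M.lift_trivCof_fib i _ hcof hW hF
    have sq : CommSq (𝟙 F) i (0 : F ⟶ (0 : A)) 0 := ⟨by simp⟩
    exact ⟨sq.lift, sq.fac_left⟩
  · intro H
    obtain ⟨Z, g, h, hcof, hW, hfib, -⟩ := M.factor_trivCof_fib (0 : F ⟶ (0 : A))
    obtain ⟨hg, hC⟩ := (hTC g).1 ⟨hcof, hW⟩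
    obtain ⟨r, hr⟩ := H Z (cokernel g) g (cokernel.π g) (cokernel.condition g)
      { exact := ShortComplex.exact_cokernel g
        mono_f := hg
        epi_g := inferInstanceAs (Epi (cokernel.π g)) } hC
    exact M.Fib_retract _ h g r (𝟙 _) (𝟙 _) hr (Category.id_comp _)
      ((isZero_zero A).eq_of_tgt _ _) ((isZero_zero A).eq_of_tgt _ _) hfib
end
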